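/- arXiv:1402.4397 — 2 statements merged into one kernel-verified Lean document; each statement's English description precedes it below -/
import Mathlib

section
/- A cancellative monoid H is permutably factorial if and only if H is atomic and every atom of H is prime-like. -/
def MAtom {H : Type*} [Monoid H] (u : H) : Prop :=
  ¬ IsUnit u ∧ ∀ a b : H, u = a * b → IsUnit a ∨ IsUnit b

def TAssoc {H : Type*} [Monoid H] (a b : H) : Prop :=
  ∃ ε η : Hˣ, b = (ε : H) * a * (η : H)

def Atomic (H : Type*) [Monoid H] : Prop :=
  ∀ a : H, ¬ IsUnit a → ∃ l : List H, l ≠ [] ∧ (∀ u ∈ l, MAtom u) ∧ a = l.prod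

def T1Cond {H T : Type*} [Monoid H] [Monoid T] (φ : H →* T) : Prop :=
  (∀ t : T, ∃ (ε η : Tˣ) (a : H), t = (ε : T) * φ a * (η : T)) ∧
    ∀ a : H, IsUnit (φ a) ↔ IsUnit a

def IsTransferHom {H T : Type*} [Monoid H] [Monoid T] (φ : H →* T) : Prop :=
  T1Cond φ ∧
    ∀ (a : H) (b₁ b₂ : T), φ a = b₁ * b₂ →
      ∃ (a₁ a₂ : H) (ε : Tˣ), a = a₁ * a₂ ∧ φ a₁ = b₁ * ((ε⁻¹ : Tˣ) : T) ∧ φ a₂ = (ε : T) * b₂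

def IsWeakTransferHom {H T : Type*} [Monoid H] [Monoid T] (φ : H →* T) : Prop :=
  T1Cond φ ∧
    ∀ (a : H) (n : ℕ), 0 < n → ∀ v : Fin n → T, (∀ i, MAtom (v i)) →
      φ a = (List.ofFn v).prod →
      ∃ (u : Fin n → H) (σ : Equiv.Perm (Fin n)),
        (∀ i, MAtom (u i)) ∧ a = (List.ofFn u).prod ∧ ∀ i, TAssoc (φ (u i)) (v (σ i))

def IsIsoatomic {H T : Type*} [Monoid H] [Monoid T] (φ : H →* T) : Prop :=
  ∀ u v : H, MAtom u → MAtom v → TAssoc (φ u) (φ v) → TAssoc u v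

def lengthsOf {H : Type*} [Monoid H] (a : H) : Set ℕ :=
  {n | (n = 0 ∧ IsUnit a) ∨
    ∃ l : List H, l ≠ [] ∧ (∀ u ∈ l, MAtom u) ∧ a = l.prod ∧ l.length = n}
/-- Divisibility up to permutation: `a ∣_p b`. -/
def dvdP {H : Type*} [Monoid H] (a b : H) : Prop :=
  ∃ (k l : ℕ) (u : Fin k → H) (v : Fin l → H),
    (∀ i, MAtom (u i)) ∧ (∀ j, MAtom (v j)) ∧
    TAssoc a (List.ofFn u).prod ∧ TAssoc b (List.ofFn v).prod ∧
    ∃ σ : Fin k ↪ Fin l, ∀ i, TAssoc (u i) (v (σ i))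

/-- An almost prime-like element (with respect to `∣_p`). -/
def APLike {H : Type*} [Monoid H] (q : H) : Prop :=
  ¬ IsUnit q ∧ ∀ a b : H, dvdP q (a * b) → dvdP q a ∨ dvdP q b

/-- The number of entries of `l` associated to `q`. -/
noncomputable def countAssoc {H : Type*} [Monoid H] (l : List H) (q : H) : ℕ :=
  Nat.card {i : Fin l.length // TAssoc (l.get i) q}

/-- The `q`-adic valuation of `a`: the set of numbers of occurrences (up to associativity)
of `q` in factorizations of `a` into atoms. -/
def Vq {H : Type*} [Monoid H] (q a : H) : Set ℕ :=
  {n | ∃ l : List H, (∀ u ∈ l, MAtom u) ∧ TAssoc a l.prod ∧ countAssoc l q = n}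

/-- A prime-like element: almost prime-like, with singleton `q`-adic valuations. -/
def PrimeLike {H : Type*} [Monoid H] (q : H) : Prop :=
  APLike q ∧ ∀ a : H, ∃ n : ℕ, Vq q a = {n}

/-- `H` is permutably factorial. -/
def PermutablyFactorial (H : Type*) [Monoid H] : Prop :=
  Atomic H ∧
    ∀ (k l : ℕ) (u : Fin k → H) (v : Fin l → H),
      (∀ i, MAtom (u i)) → (∀ j, MAtom (v j)) →
      (List.ofFn u).prod = (List.ofFn v).prod →
      ∃ σ : Fin k ≃ Fin l, ∀ i, TAssoc (u i) (v (σ i))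

theorem TA_refl {H : Type*} [Monoid H] (a : H) : TAssoc a a := ⟨1, 1, by simp⟩

theorem TA_symm {H : Type*} [Monoid H] {a b : H} (h : TAssoc a b) : TAssoc b a := by
  obtain ⟨ε, η, rfl⟩ := h
  exact ⟨ε⁻¹, η⁻¹, by simp [mul_assoc]⟩

theorem TA_trans {H : Type*} [Monoid H] {a b c : H} (h : TAssoc a b) (h' : TAssoc b c) :
    TAssoc a c := by
  obtain ⟨ε, η, rfl⟩ := h
  obtain ⟨ε', η', rfl⟩ := h'
  exact ⟨ε' * ε, η * η', by simp [mul_assoc]⟩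

theorem TA_unit {H : Type*} [Monoid H] {a b : H} (h : TAssoc a b) : IsUnit a ↔ IsUnit b := by
  obtain ⟨ε, η, rfl⟩ := h
  simp

theorem TA_atom {H : Type*} [Monoid H] {a b : H} (h : TAssoc a b) (ha : MAtom a) : MAtom b := by
  refine ⟨fun hb => ha.1 ((TA_unit h).2 hb), fun x y hxy => ?_⟩
  obtain ⟨ε, η, h⟩ := TA_symm h
  have := ha.2 (ε * x) (y * η) (by rw [h, hxy]; simp [mul_assoc])
  simpa using this

theorem unit_left {H : Type*} [CancelMonoid H] {x y : H} (h : IsUnit (x * y)) : IsUnit x := by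
  obtain ⟨u, hu⟩ := h
  have h1 : x * (y * ((u⁻¹ : Hˣ) : H)) = 1 := by rw [← mul_assoc, ← hu]; simp
  have h2 : (y * ((u⁻¹ : Hˣ) : H)) * x = 1 := by
    apply mul_right_cancel (b := y * ((u⁻¹ : Hˣ) : H))
    rw [mul_assoc, h1]; simp
  exact ⟨⟨x, _, h1, h2⟩, rfl⟩

/-- Termwise association up to permutation. -/
def EL {H : Type*} [Monoid H] (l l' : List H) : Prop :=
  ∃ σ : Fin l.length ≃ Fin l'.length, ∀ i, TAssoc (l.get i) (l'.get (σ i))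

theorem EL_count {H : Type*} [Monoid H] {l l' : List H} (h : EL l l') (q : H) :
    countAssoc l q = countAssoc l' q := by
  obtain ⟨σ, hσ⟩ := h
  refine Nat.card_congr (σ.subtypeEquiv fun i => ⟨fun h => TA_trans (TA_symm (hσ i)) h,
    fun h => TA_trans (hσ i) h⟩)

theorem EL_mem {H : Type*} [Monoid H] {l l' : List H} (h : EL l l') {x : H} (hx : x ∈ l) :
    ∃ y ∈ l', TAssoc x y := by
  obtain ⟨σ, hσ⟩ := h
  obtain ⟨i, rfl⟩ := List.get_of_mem hx
  exact ⟨_, List.get_mem _ _, hσ i⟩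

theorem EL_trans {H : Type*} [Monoid H] {l l' l'' : List H} (h : EL l l') (h' : EL l' l'') :
    EL l l'' := by
  obtain ⟨σ, hσ⟩ := h
  obtain ⟨τ, hτ⟩ := h'
  exact ⟨σ.trans τ, fun i => TA_trans (hσ i) (hτ (σ i))⟩

theorem EL_of_forall₂ {H : Type*} [Monoid H] {l l' : List H} (h : List.Forall₂ TAssoc l l') :
    EL l l' :=
  ⟨finCongr h.length_eq, fun i => h.get i.2 (by rw [← h.length_eq]; exact i.2)⟩

theorem mul_right_list {H : Type*} [Monoid H] (η : Hˣ) : ∀ l : List H, l ≠ [] →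
    ∃ l' : List H, l'.prod = l.prod * η ∧ List.Forall₂ TAssoc l l'
  | [], h => absurd rfl h
  | [a], _ => ⟨[a * η], by simp, by
      refine List.Forall₂.cons ⟨1, η, by simp⟩ List.Forall₂.nil⟩
  | a :: b :: t, _ => by
      obtain ⟨l', h1, h2⟩ := mul_right_list η (b :: t) (by simp)
      refine ⟨a :: l', ?_, List.Forall₂.cons (TA_refl a) h2⟩
      rw [List.prod_cons, List.prod_cons, h1, mul_assoc]

theorem mul_left_list {H : Type*} [Monoid H] (η : Hˣ) (l : List H) (h : l ≠ []) :
    ∃ l' : List H, l'.prod = η * l.prod ∧ List.Forall₂ TAssoc l l' := by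
  cases l with
  | nil => exact absurd rfl h
  | cons a t =>
    refine ⟨(η * a) :: t, by simp [mul_assoc], List.Forall₂.cons ⟨η, 1, by simp⟩ ?_⟩
    exact List.forall₂_same.2 fun x _ => TA_refl x

theorem atoms_of_forall₂ {H : Type*} [Monoid H] {l l' : List H} (h : List.Forall₂ TAssoc l l')
    (hl : ∀ u ∈ l, MAtom u) : ∀ u ∈ l', MAtom u := by
  induction h with
  | nil => simp
  | cons h _ ih =>
    simp only [List.mem_cons, forall_eq_or_imp] at hl ⊢
    exact ⟨TA_atom h hl.1, ih hl.2⟩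

theorem nil_of_unit {H : Type*} [CancelMonoid H] {l : List H} (hl : ∀ u ∈ l, MAtom u)
    (h : IsUnit l.prod) : l = [] := by
  cases l with
  | nil => rfl
  | cons a t =>
    rw [List.prod_cons] at h
    exact absurd (unit_left h) (hl a (by simp)).1

theorem PF_list {H : Type*} [CancelMonoid H] (hP : PermutablyFactorial H) {l l' : List H}
    (hl : ∀ u ∈ l, MAtom u) (hl' : ∀ u ∈ l', MAtom u) (h : TAssoc l.prod l'.prod) : EL l l' := by
  by_cases h0 : l = []
  · subst h0
    have : l' = [] := nil_of_unit hl' ((TA_unit h).1 (by simp))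
    subst this
    exact ⟨Equiv.refl _, fun i => TA_refl _⟩
  · obtain ⟨ε, η, he⟩ := h
    obtain ⟨l1, h1, f1⟩ := mul_left_list ε l h0
    have h10 : l1 ≠ [] := by
      rintro rfl
      cases f1
      exact h0 rfl
    obtain ⟨l2, h2, f2⟩ := mul_right_list η l1 h10
    have a2 := atoms_of_forall₂ f2 (atoms_of_forall₂ f1 hl)
    have e3 : EL l2 l' := hP.2 l2.length l'.length l2.get l'.get
      (fun i => a2 _ (List.get_mem _ _)) (fun i => hl' _ (List.get_mem _ _))
      (by rw [List.ofFn_get, List.ofFn_get, h2, h1, he])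
    exact EL_trans (EL_of_forall₂ f1) (EL_trans (EL_of_forall₂ f2) e3)

theorem dvdP_of_mem {H : Type*} [Monoid H] {q b v : H} {l : List H} (hq : MAtom q)
    (hl : ∀ u ∈ l, MAtom u) (hb : TAssoc b l.prod) (hv : v ∈ l) (hqv : TAssoc q v) :
    dvdP q b := by
  obtain ⟨i, rfl⟩ := List.get_of_mem hv
  exact ⟨1, l.length, fun _ => q, l.get, fun _ => hq, fun i => hl _ (List.get_mem _ _),
    by simpa using TA_refl q, by rwa [List.ofFn_get],
    ⟨fun _ => i, fun a b _ => Subsingleton.elim a b⟩, fun _ => hqv⟩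

theorem mem_of_dvdP {H : Type*} [CancelMonoid H] (hP : PermutablyFactorial H) {q b : H}
    (hq : MAtom q) (h : dvdP q b) :
    ∃ l : List H, (∀ u ∈ l, MAtom u) ∧ TAssoc b l.prod ∧ ∃ v ∈ l, TAssoc q v := by
  obtain ⟨k, n, u, v, hu, hv, hqu, hbv, σ, hσ⟩ := h
  refine ⟨List.ofFn v, by simpa [List.mem_ofFn] using hv, hbv, ?_⟩
  have hE : EL [q] (List.ofFn u) := PF_list hP (by simpa using hq)
    (by simpa [List.mem_ofFn] using hu) (by simpa using hqu)
  obtain ⟨y, hy, hqy⟩ := EL_mem hE (x := q) (by simp)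
  obtain ⟨i, rfl⟩ := (List.mem_ofFn' _ _).1 hy
  exact ⟨v (σ i), (List.mem_ofFn' _ _).2 ⟨_, rfl⟩, TA_trans hqy (hσ i)⟩

theorem exists_list {H : Type*} [Monoid H] (hA : Atomic H) (a : H) :
    ∃ l : List H, (∀ u ∈ l, MAtom u) ∧ TAssoc a l.prod := by
  by_cases ha : IsUnit a
  · obtain ⟨ε, rfl⟩ := ha
    exact ⟨[], by simp, ε⁻¹, 1, by simp⟩
  · obtain ⟨l, _, h1, h2⟩ := hA a ha
    exact ⟨l, h1, h2 ▸ TA_refl a⟩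

theorem exists_list_mul {H : Type*} [Monoid H] (hA : Atomic H) (a b : H) :
    ∃ l l' : List H, (∀ u ∈ l, MAtom u) ∧ (∀ u ∈ l', MAtom u) ∧ TAssoc a l.prod ∧
      TAssoc b l'.prod ∧ TAssoc (a * b) (l ++ l').prod := by
  obtain ⟨l, hl, h⟩ := exists_list hA a
  obtain ⟨l', hl', h'⟩ := exists_list hA b
  by_cases ha : IsUnit a
  · obtain ⟨ε, rfl⟩ := ha
    refine ⟨[], l', by simp, hl', ⟨ε⁻¹, 1, by simp⟩, h', ?_⟩
    exact TA_trans ⟨ε⁻¹, 1, by simp⟩ h'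
  by_cases hb : IsUnit b
  · obtain ⟨ε, rfl⟩ := hb
    refine ⟨l, [], hl, by simp, h, ⟨ε⁻¹, 1, by simp⟩, ?_⟩
    rw [List.append_nil]
    exact TA_trans ⟨1, ε⁻¹, by simp⟩ h
  obtain ⟨l, _, h1, rfl⟩ := hA a ha
  obtain ⟨l', _, h1', rfl⟩ := hA b hb
  exact ⟨l, l', h1, h1', TA_refl _, TA_refl _, by rw [List.prod_append]; exact TA_refl _⟩

theorem countAssoc_ofFn {H : Type*} [Monoid H] {k : ℕ} (u : Fin k → H) (q : H) :
    countAssoc (List.ofFn u) q = Nat.card {i : Fin k // TAssoc (u i) q} := by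
  refine Nat.card_congr ((finCongr List.length_ofFn).subtypeEquiv fun i => ?_)
  rw [List.get_ofFn]
  rfl

theorem permutablyFactorial_iff_atoms_primeLike {H : Type*} [CancelMonoid H] :
    PermutablyFactorial H ↔ (Atomic H ∧ ∀ u : H, MAtom u → PrimeLike u) := by
  constructor
  · intro hP
    refine ⟨hP.1, fun q hq => ⟨⟨hq.1, fun a b hab => ?_⟩, fun a => ?_⟩⟩
    · obtain ⟨l, hl, hal, v, hv, hqv⟩ := mem_of_dvdP hP hq hab
      obtain ⟨la, lb, hla, hlb, ha, hb, hab'⟩ := exists_list_mul hP.1 a b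
      have hE : EL l (la ++ lb) := PF_list hP hl
        (fun u hu => (List.mem_append.1 hu).elim (hla u) (hlb u))
        (TA_trans (TA_symm hal) hab')
      obtain ⟨y, hy, hvy⟩ := EL_mem hE hv
      rcases List.mem_append.1 hy with hy | hy
      · exact Or.inl (dvdP_of_mem hq hla ha hy (TA_trans hqv hvy))
      · exact Or.inr (dvdP_of_mem hq hlb hb hy (TA_trans hqv hvy))
    · obtain ⟨l, hl, hal⟩ := exists_list hP.1 a
      refine ⟨countAssoc l q, Set.eq_singleton_iff_unique_mem.2 ⟨⟨l, hl, hal, rfl⟩, ?_⟩⟩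
      rintro n ⟨l', hl', hal', rfl⟩
      exact EL_count (PF_list hP hl' hl (TA_trans (TA_symm hal') hal)) q
  · rintro ⟨hA, hQ⟩
    refine ⟨hA, fun k n u v hu hv huv => ?_⟩
    have key : ∀ q, MAtom q → Nat.card {i : Fin k // TAssoc (u i) q} =
        Nat.card {i : Fin n // TAssoc (v i) q} := by
      intro q hq
      obtain ⟨m, hm⟩ := (hQ q hq).2 (List.ofFn u).prod
      have h1 : countAssoc (List.ofFn u) q ∈ Vq q (List.ofFn u).prod :=
        ⟨_, by simpa [List.mem_ofFn] using hu, TA_refl _, rfl⟩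
      have h2 : countAssoc (List.ofFn v) q ∈ Vq q (List.ofFn u).prod :=
        ⟨_, by simpa [List.mem_ofFn] using hv, huv ▸ TA_refl _, rfl⟩
      rw [hm, Set.mem_singleton_iff, countAssoc_ofFn] at h1 h2
      rw [h1, h2]
    let S : Setoid H := ⟨TAssoc, TA_refl, TA_symm, TA_trans⟩
    have hS : ∀ a b : H, (Quotient.mk S a = Quotient.mk S b) ↔ TAssoc a b :=
      fun a b => Quotient.eq
    have fib : ∀ c : Quotient S, Nonempty
        ({i : Fin k // Quotient.mk S (u i) = c} ≃ {i : Fin n // Quotient.mk S (v i) = c}) := by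
      intro c
      induction c using Quotient.inductionOn with
      | h q =>
      simp only [hS]
      by_cases hq : MAtom q
      · exact ⟨(Finite.equivFin _).trans ((finCongr (key q hq)).trans (Finite.equivFin _).symm)⟩
      · have : IsEmpty {i : Fin k // TAssoc (u i) q} := ⟨fun i => hq (TA_atom i.2 (hu _))⟩
        have : IsEmpty {i : Fin n // TAssoc (v i) q} := ⟨fun i => hq (TA_atom i.2 (hv _))⟩
        exact ⟨Equiv.equivOfIsEmpty _ _⟩
    refine ⟨Equiv.ofFiberEquiv (f := fun i => Quotient.mk S (u i))
      (g := fun i => Quotient.mk S (v i)) fun c => (fib c).some, fun i => ?_⟩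
    rw [← hS]
    exact (Equiv.ofFiberEquiv_map (f := fun i => Quotient.mk S (u i))
      (g := fun i => Quotient.mk S (v i)) (fun c => (fib c).some) i).symm
end

section
/- A cancellative monoid H is permutably factorial if and only if H is atomic, ω_p'(H) = ω_p(H) ≤ 1, and every almost prime-like element of H is prime-like. -/
/-- The `ω_p`-invariant of the pair `(a, b)` (factorizations of `a` into atoms). -/
noncomputable def omegaEl {H : Type*} [Monoid H] (a b : H) : ℕ∞ :=
  sInf {N : ℕ∞ | ∀ (n : ℕ) (u : Fin n → H), (∀ i, MAtom (u i)) →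
    a = (List.ofFn u).prod → dvdP b a →
    ∃ k : ℕ, (k : ℕ∞) ≤ N ∧ ∃ σ : Fin k ↪ Fin n,
      dvdP b (List.ofFn fun i => u (σ i)).prod}

/-- The `ω_p'`-invariant of the pair `(a, b)` (products of arbitrary elements). -/
noncomputable def omegaEl' {H : Type*} [Monoid H] (a b : H) : ℕ∞ :=
  sInf {N : ℕ∞ | ∀ (n : ℕ) (u : Fin n → H),
    a = (List.ofFn u).prod → dvdP b a →
    ∃ k : ℕ, (k : ℕ∞) ≤ N ∧ ∃ σ : Fin k ↪ Fin n,
      dvdP b (List.ofFn fun i => u (σ i)).prod}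

noncomputable def omegaH {H : Type*} [Monoid H] (b : H) : ℕ∞ := ⨆ a : H, omegaEl a b

noncomputable def omegaH' {H : Type*} [Monoid H] (b : H) : ℕ∞ := ⨆ a : H, omegaEl' a b

noncomputable def omegaMon (H : Type*) [Monoid H] : ℕ∞ :=
  ⨆ (u : H) (_ : MAtom u), omegaH u

noncomputable def omegaMon' (H : Type*) [Monoid H] : ℕ∞ :=
  ⨆ (u : H) (_ : MAtom u), omegaH' u

section Helpers

variable {H : Type*} [CancelMonoid H]

theorem TAssoc.refl' (a : H) : TAssoc a a := ⟨1, 1, by simp⟩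

theorem TAssoc.symm' {a b : H} (h : TAssoc a b) : TAssoc b a := by
  obtain ⟨ε, η, rfl⟩ := h
  exact ⟨ε⁻¹, η⁻¹, by simp [mul_assoc]⟩

theorem TAssoc.trans' {a b c : H} (h : TAssoc a b) (h' : TAssoc b c) : TAssoc a c := by
  obtain ⟨ε, η, rfl⟩ := h
  obtain ⟨ε', η', rfl⟩ := h'
  exact ⟨ε' * ε, η * η', by simp [mul_assoc]⟩

theorem TAssoc.isUnit_iff {a b : H} (h : TAssoc a b) : IsUnit a ↔ IsUnit b := by
  obtain ⟨ε, η, rfl⟩ := h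
  simp

theorem MAtom.of_tassoc {a b : H} (ha : MAtom a) (h : TAssoc a b) : MAtom b := by
  refine ⟨fun hb => ha.1 (h.isUnit_iff.2 hb), fun c d hcd => ?_⟩
  obtain ⟨ε, η, hε⟩ := h.symm'
  have := ha.2 (ε * c) (d * η) (by rw [hε, hcd]; simp [mul_assoc])
  simpa using this

theorem nil_of_isUnit {l : List H} (hl : ∀ x ∈ l, MAtom x) (h : IsUnit l.prod) : l = [] := by
  cases l with
  | nil => rfl
  | cons x t =>
    rw [List.prod_cons] at h
    exact absurd (isUnit_of_mul_isUnit_left h) (hl x (by simp)).1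

/-- Absorb units into a nonempty list of atoms. -/
theorem exists_adjust (l : List H) : l ≠ [] → (∀ x ∈ l, MAtom x) → ∀ ε η : Hˣ,
    ∃ l' : List H, (∀ x ∈ l', MAtom x) ∧ l'.prod = ε * l.prod * η ∧ List.Forall₂ TAssoc l l' := by
  induction l with
  | nil => intro h; exact absurd rfl h
  | cons x t ih =>
    intro _ hl ε η
    by_cases ht : t = []
    · subst ht
      refine ⟨[ε * x * η], ?_, by simp, ?_⟩
      · intro y hy
        rw [List.mem_singleton] at hy
        subst hy
        exact (hl x (by simp)).of_tassoc ⟨ε, η, rfl⟩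
      · exact List.Forall₂.cons ⟨ε, η, rfl⟩ List.Forall₂.nil
    · obtain ⟨t', h1, h2, h3⟩ := ih ht (fun y hy => hl y (by simp [hy])) 1 η
      refine ⟨(ε * x) :: t', ?_, ?_, List.Forall₂.cons ⟨ε, 1, by simp⟩ h3⟩
      · intro y hy
        rcases List.mem_cons.1 hy with rfl | hy
        · exact (hl x (by simp)).of_tassoc ⟨ε, 1, by simp⟩
        · exact h1 y hy
      · simp [h2, mul_assoc]

theorem count_forall₂ {l l' : List H} (h : List.Forall₂ TAssoc l l') (q : H) :
    countAssoc l q = countAssoc l' q := by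
  obtain ⟨hlen, hget⟩ := List.forall₂_iff_get.1 h
  refine Nat.card_congr (Equiv.subtypeEquiv (finCongr hlen) fun i => ?_)
  have := hget i i.2 (hlen ▸ i.2)
  exact ⟨fun h => this.symm'.trans' h, fun h => this.trans' h⟩

theorem count_ofFn {k : ℕ} (u : Fin k → H) (q : H) :
    countAssoc (List.ofFn u) q = Nat.card {i : Fin k // TAssoc (u i) q} := by
  refine Nat.card_congr (Equiv.subtypeEquiv (finCongr List.length_ofFn) fun i => ?_)
  simp
  rfl

theorem count_pos_iff (l : List H) (q : H) :
    0 < countAssoc l q ↔ ∃ x ∈ l, TAssoc x q := by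
  unfold countAssoc
  rw [Nat.card_pos_iff]
  constructor
  · rintro ⟨⟨i, hi⟩, _⟩
    exact ⟨_, List.get_mem l i, hi⟩
  · rintro ⟨x, hx, hq⟩
    obtain ⟨i, rfl⟩ := List.get_of_mem hx
    exact ⟨⟨⟨i, hq⟩⟩, inferInstance⟩

/-- `l` is a factorization of `a` up to units. -/
def Fac (a : H) (l : List H) : Prop := (∀ x ∈ l, MAtom x) ∧ TAssoc a l.prod

theorem exists_fac (hA : Atomic H) (a : H) : ∃ l, Fac a l := by
  by_cases ha : IsUnit a
  · obtain ⟨e, rfl⟩ := ha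
    exact ⟨[], by simp, e⁻¹, 1, by simp⟩
  · obtain ⟨l, -, h1, rfl⟩ := hA a ha
    exact ⟨l, h1, TAssoc.refl' _⟩

theorem Fac.mul {a b : H} {l m : List H} (hl : Fac a l) (hm : Fac b m) :
    ∃ m', Fac (a * b) (l ++ m') ∧ List.Forall₂ TAssoc m m' := by
  obtain ⟨hl1, hl2⟩ := hl
  obtain ⟨hm1, hm2⟩ := hm
  obtain ⟨ε, η, h⟩ := hl2.symm'
  obtain ⟨ε', η', h'⟩ := hm2.symm'
  by_cases hm0 : m = []
  · subst hm0
    refine ⟨[], ⟨by simpa using hl1, ?_⟩, List.Forall₂.nil⟩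
    refine TAssoc.symm' ⟨ε, η * ε' * η', ?_⟩
    rw [h, h']; simp [mul_assoc]
  · obtain ⟨m', h1, h2, h3⟩ := exists_adjust m hm0 hm1 (η * ε') η'
    refine ⟨m', ⟨?_, ?_⟩, h3⟩
    · intro x hx
      rcases List.mem_append.1 hx with hx | hx
      exacts [hl1 x hx, h1 x hx]
    · refine TAssoc.symm' ⟨ε, 1, ?_⟩
      rw [h, h', List.prod_append, h2]; simp [mul_assoc]

theorem dvdP_atom_iff {u a : H} (hu : MAtom u) :
    dvdP u a ↔ ∃ l, Fac a l ∧ ∃ x ∈ l, TAssoc x u := by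
  constructor
  · rintro ⟨k, n, w, v, hw, hv, h1, h2, σ, hσ⟩
    refine ⟨List.ofFn v, ⟨by simpa [List.forall_mem_ofFn_iff] using hv, h2⟩, ?_⟩
    match k, w, hw, h1, σ, hσ with
    | 0, w, hw, h1, σ, hσ =>
      exact absurd (h1.isUnit_iff.2 (by simp)) hu.1
    | k + 1, w, hw, h1, σ, hσ =>
      refine ⟨v (σ 0), by simp, (hσ 0).symm'.trans' ?_⟩
      have hP := hu.of_tassoc h1
      rw [List.ofFn_succ, List.prod_cons] at h1 hP
      rcases hP.2 _ _ rfl with h | h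
      · exact absurd h (hw 0).1
      · obtain ⟨e, he⟩ := h
        refine TAssoc.trans' ⟨1, e, ?_⟩ h1.symm'
        rw [he]; simp
  · rintro ⟨l, ⟨hl, hal⟩, x, hx, hxu⟩
    obtain ⟨i, rfl⟩ := List.get_of_mem hx
    refine ⟨1, l.length, fun _ => u, l.get, fun _ => hu, fun j => hl _ (List.get_mem l j),
      ?_, by simpa using hal, ⟨fun _ => i, fun a b _ => Subsingleton.elim a b⟩,
      fun _ => hxu.symm'⟩
    simpa using TAssoc.refl' u

theorem not_dvdP_one {u : H} (hu : MAtom u) : ¬ dvdP u (1 : H) := by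
  rw [dvdP_atom_iff hu]
  rintro ⟨l, ⟨hl, h⟩, x, hx, -⟩
  rw [nil_of_isUnit hl (h.isUnit_iff.1 isUnit_one)] at hx
  simp at hx

theorem dvdP_self {u : H} (hu : MAtom u) : dvdP u u := by
  rw [dvdP_atom_iff hu]
  exact ⟨[u], ⟨by simpa using hu, by simpa using TAssoc.refl' u⟩, u, by simp, TAssoc.refl' u⟩

theorem count_unique (hP : PermutablyFactorial H) {a : H} {l m : List H} (hl : Fac a l)
    (hm : Fac a m) (q : H) : countAssoc l q = countAssoc m q := by
  have hlm : TAssoc l.prod m.prod := hl.2.symm'.trans' hm.2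
  by_cases h0 : l = []
  · subst h0
    rw [nil_of_isUnit hm.1 (hlm.isUnit_iff.1 (by simp))]
  · obtain ⟨ε, η, h⟩ := hlm
    obtain ⟨l', h1, h2, h3⟩ := exists_adjust l h0 hl.1 ε η
    rw [count_forall₂ h3]
    obtain ⟨σ, hσ⟩ := hP.2 l'.length m.length l'.get m.get (fun i => h1 _ (List.get_mem _ i))
      (fun i => hm.1 _ (List.get_mem _ i)) (by rw [List.ofFn_get, List.ofFn_get, h, h2])
    refine Nat.card_congr (Equiv.subtypeEquiv σ fun i => ?_)
    exact ⟨fun h => (hσ i).symm'.trans' h, fun h => (hσ i).trans' h⟩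

theorem atom_APLike_of_PF (hP : PermutablyFactorial H) {u : H} (hu : MAtom u) (a b : H)
    (h : dvdP u (a * b)) : dvdP u a ∨ dvdP u b := by
  rw [dvdP_atom_iff hu] at h
  obtain ⟨n, hn, hx⟩ := h
  rw [← count_pos_iff] at hx
  obtain ⟨l, hl⟩ := exists_fac hP.1 a
  obtain ⟨m, hm⟩ := exists_fac hP.1 b
  obtain ⟨m', hlm, hmm⟩ := hl.mul hm
  rw [count_unique hP hn hlm, count_pos_iff] at hx
  obtain ⟨x, hx, hxu⟩ := hx
  rw [dvdP_atom_iff hu, dvdP_atom_iff hu]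
  rcases List.mem_append.1 hx with hx | hx
  · exact Or.inl ⟨l, hl, x, hx, hxu⟩
  · refine Or.inr ⟨m, hm, ?_⟩
    rw [← count_pos_iff, count_forall₂ hmm, count_pos_iff]
    exact ⟨x, hx, hxu⟩

theorem dvdP_list_of_PF (hP : PermutablyFactorial H) {u : H} (hu : MAtom u) (l : List H)
    (h : dvdP u l.prod) : ∃ x ∈ l, dvdP u x := by
  induction l with
  | nil => exact absurd (by simpa using h) (not_dvdP_one hu)
  | cons x t ih =>
    rw [List.prod_cons] at h
    rcases atom_APLike_of_PF hP hu _ _ h with h | h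
    · exact ⟨x, by simp, h⟩
    · obtain ⟨y, hy, h⟩ := ih h
      exact ⟨y, by simp [hy], h⟩

theorem omegaMon_le_omegaMon' : omegaMon H ≤ omegaMon' H := by
  refine iSup_mono fun u => iSup_mono fun _ => iSup_mono fun a => ?_
  exact sInf_le_sInf fun N hN n w _ => hN n w

theorem one_le_omegaMon {u : H} (hu : MAtom u) : 1 ≤ omegaMon H := by
  refine le_trans ?_ (le_iSup₂_of_le u hu (le_iSup (fun a => omegaEl a u) u))
  refine le_sInf fun N hN => ?_
  obtain ⟨k, hk, σ, h⟩ := hN 1 (fun _ => u) (fun _ => hu) (by simp) (dvdP_self hu)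
  match k, hk, σ, h with
  | 0, hk, σ, h => exact absurd (by simpa using h) (not_dvdP_one hu)
  | k + 1, hk, σ, h => exact le_trans (by push_cast; exact le_add_self) hk

theorem omegaMon'_le_one (hP : PermutablyFactorial H) : omegaMon' H ≤ 1 := by
  refine iSup₂_le fun u hu => iSup_le fun a => sInf_le ?_
  intro n w ha hd
  rw [ha] at hd
  obtain ⟨x, hx, h⟩ := dvdP_list_of_PF hP hu _ hd
  obtain ⟨i, rfl⟩ := (List.mem_ofFn' _ _).1 hx
  exact ⟨1, by simp, ⟨fun _ => i, fun a b _ => Subsingleton.elim a b⟩, by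
    simp only [List.ofFn_succ, List.ofFn_zero, List.prod_cons, List.prod_nil, mul_one]
    exact h⟩

theorem primeLike_of_PF (hP : PermutablyFactorial H) {q : H} (hq : APLike q) : PrimeLike q := by
  refine ⟨hq, fun a => ?_⟩
  obtain ⟨l, hl⟩ := exists_fac hP.1 a
  refine ⟨countAssoc l q, Set.eq_singleton_iff_unique_mem.2 ⟨⟨l, hl.1, hl.2, rfl⟩, ?_⟩⟩
  rintro n ⟨m, hm1, hm2, rfl⟩
  exact count_unique hP ⟨hm1, hm2⟩ hl q

theorem atom_APLike_of_omega (h1 : omegaMon' H ≤ 1) {u : H} (hu : MAtom u) : APLike u := by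
  refine ⟨hu.1, fun a b hd => ?_⟩
  have h2 : omegaEl' (a * b) u ≤ 1 :=
    le_trans (le_iSup₂_of_le u hu (le_iSup (fun a => omegaEl' a u) (a * b))) h1
  have hmem := csInf_mem (s := {N : ℕ∞ | ∀ (n : ℕ) (w : Fin n → H),
    a * b = (List.ofFn w).prod → dvdP u (a * b) →
    ∃ k : ℕ, (k : ℕ∞) ≤ N ∧ ∃ σ : Fin k ↪ Fin n,
      dvdP u (List.ofFn fun i => w (σ i)).prod}) ⟨⊤, fun n w h hd => ⟨n, le_top,
        Function.Embedding.refl _, by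
          have : (List.ofFn fun i => w (Function.Embedding.refl (Fin n) i)) = List.ofFn w := rfl
          rw [this, ← h]; exact hd⟩⟩
  obtain ⟨k, hk, σ, h⟩ := hmem 2 ![a, b] (by simp) hd
  have hk1 : (k : ℕ∞) ≤ 1 := le_trans hk h2
  have hk1 : k ≤ 1 := by exact_mod_cast hk1
  match k, hk1, σ, h with
  | 0, _, σ, h => exact absurd (by simpa using h) (not_dvdP_one hu)
  | 1, _, σ, h =>
    have h' : dvdP u (![a, b] (σ 0)) := by simpa using h
    generalize σ 0 = j at h'
    fin_cases j
    · exact Or.inl (by simpa using h')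
    · exact Or.inr (by simpa using h')

theorem PF_of_primeLike (hA : Atomic H) (hp : ∀ u : H, MAtom u → PrimeLike u) :
    PermutablyFactorial H := by
  refine ⟨hA, fun k l u v hu hv huv => ?_⟩
  have key : ∀ q : H, Nat.card {i // TAssoc (u i) q} = Nat.card {j // TAssoc (v j) q} := by
    intro q
    by_cases hq : MAtom q
    · obtain ⟨n, hn⟩ := (hp q hq).2 (List.ofFn u).prod
      have e1 : countAssoc (List.ofFn u) q ∈ Vq q (List.ofFn u).prod :=
        ⟨_, by simpa [List.forall_mem_ofFn_iff] using hu, TAssoc.refl' _, rfl⟩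
      have e2 : countAssoc (List.ofFn v) q ∈ Vq q (List.ofFn u).prod :=
        ⟨_, by simpa [List.forall_mem_ofFn_iff] using hv, huv ▸ TAssoc.refl' _, rfl⟩
      rw [hn, Set.mem_singleton_iff, count_ofFn] at e1 e2
      rw [e1, e2]
    · have : IsEmpty {i // TAssoc (u i) q} := ⟨fun i => hq ((hu i).of_tassoc i.2)⟩
      have : IsEmpty {j // TAssoc (v j) q} := ⟨fun i => hq ((hv i).of_tassoc i.2)⟩
      simp
  let S : Setoid H := ⟨TAssoc, TAssoc.refl', TAssoc.symm', TAssoc.trans'⟩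
  let f : Fin k → Quotient S := fun i => Quotient.mk S (u i)
  let g : Fin l → Quotient S := fun i => Quotient.mk S (v i)
  have e : ∀ c : Quotient S, Nonempty ({i // f i = c} ≃ {j // g j = c}) := by
    intro c
    induction c using Quotient.inductionOn with
    | h q =>
      have h1 : ∀ i, f i = Quotient.mk S q ↔ TAssoc (u i) q := fun i => Quotient.eq
      have h2 : ∀ i, g i = Quotient.mk S q ↔ TAssoc (v i) q := fun i => Quotient.eq
      simp only [h1, h2]
      exact Finite.card_eq.1 (key q)
  let σ : Fin k ≃ Fin l := (Equiv.sigmaFiberEquiv f).symm.trans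
    ((Equiv.sigmaCongrRight fun c => Classical.choice (e c)).trans (Equiv.sigmaFiberEquiv g))
  refine ⟨σ, fun i => ?_⟩
  have : g (σ i) = f i := (Classical.choice (e (f i)) ⟨i, rfl⟩).2
  exact Quotient.exact this.symm

end Helpers

/-- A cancellative monoid is permutably factorial iff it is atomic,
`ω_p'(H) = ω_p(H) ≤ 1`, and every almost prime-like element is prime-like. -/
theorem permutablyFactorial_iff_omega {H : Type*} [CancelMonoid H] :
    PermutablyFactorial H ↔
      (Atomic H ∧ omegaMon' H = omegaMon H ∧ omegaMon H ≤ 1 ∧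
        ∀ q : H, APLike q → PrimeLike q) := by
  constructor
  · intro hP
    have h1 := omegaMon'_le_one hP
    have h2 := omegaMon_le_omegaMon' (H := H)
    refine ⟨hP.1, le_antisymm ?_ h2, h2.trans h1, fun q hq => primeLike_of_PF hP hq⟩
    by_cases h : ∃ u : H, MAtom u
    · obtain ⟨u, hu⟩ := h
      exact h1.trans (one_le_omegaMon hu)
    · exact iSup₂_le fun u hu => absurd ⟨u, hu⟩ h
  · rintro ⟨hA, h1, h2, h3⟩
    exact PF_of_primeLike hA fun u hu => h3 u (atom_APLike_of_omega (h1 ▸ h2) hu)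
end
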